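/- The descent polynomials satisfy, for all n ≥ 0, the recurrence relations (as identities of polynomials in ℚ[x], with ' denoting the formal derivative): R⁺_{n+1}(x) = 2nx·R⁺_n(x) + 2x(1−2x)·(R⁺_n)'(x) + R_n(x); R⁻_{n+1}(x) = (2n+1)x·R⁻_n(x) + 2x(1−2x)·(R⁻_n)'(x) + x·R_n(x); R_{n+1}(x) = (1+(2n+1)x)·R_n(x) + 2x(1−2x)·R_n'(x) + x·R⁻_n(x); with initial conditions R⁺_0(x) = R_0(x) = 1 and R⁻_0(x) = 0. -/

import Mathlib

/-!
Every signed simsun word of rank `n + 1` arises in exactly one way by inserting `N` or `-N`, where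
`N = n + 1`, after the leading `0` of a signed simsun word of rank `n`, subject only to the
condition that the new word has no double descent (`sum_simWords_succ`).

Let `w` be a word of rank `n` with `d` descents and no double descent. Inserting `N` or `-N` inside
a descent, or `N` at the end, keeps the number of descents and is always allowed: `1 + 2d`
insertions. Any other allowed insertion adds one descent. For `N` it must go inside an ascent that
is not followed by a descent, which leaves `n - 2d` places, plus one if `w` starts with a descent.
For `-N` it must go neither inside nor directly after a descent, which leaves `n + 1 - 2d` places.
Hence `w` contributes
`(1 + 2d) x^d + (2n + 1 - 4d + [w₁ < 0]) x^(d+1)` to `R_{n+1}`, which is proved by induction on the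
word in `insSum_eq`. As `x · d/dx (x^d) = d x^d`, summation over `w` gives the recurrence for `R`.

For `R⁻`, only insertions directly after the leading `0` can change the sign of the first entry
(`insSum_neg`). The recurrence for `R⁺` is the difference of the other two, since `R⁺ = R - R⁻`.
-/

open Finset

/-- A signed permutation of rank `n`, encoded as an (unsigned) permutation of
`Fin n` together with a choice of sign for each position: the entry
`π(i+1)` of the word is `±(σ(i)+1)` where the sign is `-` iff `sgn i = true`. -/
abbrev SignedPerm (n : ℕ) := Equiv.Perm (Fin n) × (Fin n → Bool)

/-- The entry `π(j+1)` of the word of a signed permutation. -/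
def entry {n : ℕ} (π : SignedPerm n) (j : Fin n) : ℤ :=
  (if π.2 j then -1 else 1) * (((π.1 j : ℕ) : ℤ) + 1)

/-- The word `π(0)π(1)⋯π(n)` of a signed permutation (with the leading `0`). -/
def word {n : ℕ} (π : SignedPerm n) : List ℤ :=
  0 :: List.ofFn (entry π)

/-- `π(i)` for `0 ≤ i ≤ n` (and `0` outside this range). -/
def wordFn {n : ℕ} (π : SignedPerm n) (i : ℕ) : ℤ :=
  if h : 1 ≤ i ∧ i ≤ n then entry π ⟨i - 1, by omega⟩ else 0

/-- A word has no double descent: no three consecutive strictly decreasing entries. -/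
def noDD : List ℤ → Bool
  | a :: b :: c :: rest => (!(decide (b < a) && decide (c < b))) && noDD (b :: c :: rest)
  | _ => true

/-- A signed permutation is simsun if for every `0 ≤ k ≤ n`, deleting the entries
`±n, …, ±(n-k+1)` (i.e. keeping the entries of absolute value `≤ m := n - k`) from the
word `π(0)π(1)⋯π(n)` leaves a word with no three consecutive strictly decreasing
entries. -/
def IsSimsun {n : ℕ} (π : SignedPerm n) : Prop :=
  ∀ m ≤ n, noDD ((word π).filter (fun a => a.natAbs ≤ m)) = true

instance {n : ℕ} : DecidablePred (IsSimsun (n := n)) := fun _ => by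
  unfold IsSimsun; infer_instance

/-- The type-B descent number `des_B(π) = #{0 ≤ i ≤ n-1 : π(i) > π(i+1)}`. -/
def desB {n : ℕ} (π : SignedPerm n) : ℕ :=
  ((Finset.range n).filter (fun i => wordFn π (i + 1) < wordFn π i)).card

/-- The set of signed simsun permutations of rank `n`. -/
def RB (n : ℕ) : Finset (SignedPerm n) := univ.filter IsSimsun

/-- Signed simsun permutations with `π(1) > 0` (for `n = 0`, the empty permutation
is included, following the convention `R⁺_0 = 1`). -/
def RBp (n : ℕ) : Finset (SignedPerm n) :=
  (RB n).filter (fun π => 0 < wordFn π 1 ∨ n = 0)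

/-- Signed simsun permutations with `π(1) < 0`. -/
def RBm (n : ℕ) : Finset (SignedPerm n) :=
  (RB n).filter (fun π => wordFn π 1 < 0)

/-- A signed permutation is even-signed if its word has an even number of negative entries. -/
def IsEvenSigned {n : ℕ} (π : SignedPerm n) : Prop :=
  (univ.filter (fun j => π.2 j = true)).card % 2 = 0

instance {n : ℕ} : DecidablePred (IsEvenSigned (n := n)) := fun _ => by
  unfold IsEvenSigned; infer_instance

def RD (n : ℕ) : Finset (SignedPerm n) := (RB n).filter IsEvenSigned
def RT (n : ℕ) : Finset (SignedPerm n) := (RB n).filter (fun π => ¬ IsEvenSigned π)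
def RDp (n : ℕ) : Finset (SignedPerm n) := (RD n).filter (fun π => 0 < wordFn π 1 ∨ n = 0)
def RDm (n : ℕ) : Finset (SignedPerm n) := (RD n).filter (fun π => wordFn π 1 < 0)
def RTp (n : ℕ) : Finset (SignedPerm n) := (RT n).filter (fun π => 0 < wordFn π 1 ∨ n = 0)
def RTm (n : ℕ) : Finset (SignedPerm n) := (RT n).filter (fun π => wordFn π 1 < 0)

/-- `R(n,k)`, as an integer, vanishing for `k < 0`. -/
def Rcnt (n : ℕ) (k : ℤ) : ℤ := ((RB n).filter (fun π => (desB π : ℤ) = k)).card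
def Rpcnt (n : ℕ) (k : ℤ) : ℤ := ((RBp n).filter (fun π => (desB π : ℤ) = k)).card
def Rmcnt (n : ℕ) (k : ℤ) : ℤ := ((RBm n).filter (fun π => (desB π : ℤ) = k)).card
def Dcnt (n : ℕ) (k : ℤ) : ℤ := ((RD n).filter (fun π => (desB π : ℤ) = k)).card
def Tcnt (n : ℕ) (k : ℤ) : ℤ := ((RT n).filter (fun π => (desB π : ℤ) = k)).card
def Dpcnt (n : ℕ) (k : ℤ) : ℤ := ((RDp n).filter (fun π => (desB π : ℤ) = k)).card
def Dmcnt (n : ℕ) (k : ℤ) : ℤ := ((RDm n).filter (fun π => (desB π : ℤ) = k)).card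
def Tpcnt (n : ℕ) (k : ℤ) : ℤ := ((RTp n).filter (fun π => (desB π : ℤ) = k)).card
def Tmcnt (n : ℕ) (k : ℤ) : ℤ := ((RTm n).filter (fun π => (desB π : ℤ) = k)).card

open Polynomial in
/-- The descent polynomial `R_n(x) = Σ_{π ∈ RB_n} x^{des_B(π)}`. -/
noncomputable def Rpoly (n : ℕ) : ℚ[X] := ∑ π ∈ RB n, X ^ desB π
open Polynomial in
noncomputable def Rppoly (n : ℕ) : ℚ[X] := ∑ π ∈ RBp n, X ^ desB π
open Polynomial in
noncomputable def Rmpoly (n : ℕ) : ℚ[X] := ∑ π ∈ RBm n, X ^ desB π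
open Polynomial in
noncomputable def Dpoly (n : ℕ) : ℚ[X] := ∑ π ∈ RD n, X ^ desB π
open Polynomial in
noncomputable def Tpoly (n : ℕ) : ℚ[X] := ∑ π ∈ RT n, X ^ desB π
open Polynomial in
noncomputable def Dppoly (n : ℕ) : ℚ[X] := ∑ π ∈ RDp n, X ^ desB π
open Polynomial in
noncomputable def Dmpoly (n : ℕ) : ℚ[X] := ∑ π ∈ RDm n, X ^ desB π
open Polynomial in
noncomputable def Tppoly (n : ℕ) : ℚ[X] := ∑ π ∈ RTp n, X ^ desB π
open Polynomial in
noncomputable def Tmpoly (n : ℕ) : ℚ[X] := ∑ π ∈ RTm n, X ^ desB π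

/-! ### Weights of insertions into a word -/

/-- The number of descents of a word, by recursion on the word. -/
def desL : List ℤ → ℕ
  | a :: b :: l => (if b < a then 1 else 0) + desL (b :: l)
  | _ => 0

/-- The weight `x ^ des` of the word `a :: c`, set to zero when that word has a double descent. -/
def wt {A : Type*} [CommRing A] (x : A) (a : ℤ) (c : List ℤ) : A :=
  if noDD (a :: c) then x ^ desL (a :: c) else 0

/-- The total weight of all words obtained from `a :: l` by inserting `N` or `-N` somewhere
after `a`. -/
def insSum {A : Type*} [CommRing A] (x : A) (N a : ℤ) (l : List ℤ) : A :=
  ((l.permutations'Aux N).map (wt x a)).sum + ((l.permutations'Aux (-N)).map (wt x a)).sum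

section weights

variable {A : Type*} [CommRing A] (x : A)

lemma wt_asc {a b : ℤ} (h : a < b) (c : List ℤ) : wt x a (b :: c) = wt x b c := by
  have h' : ¬ b < a := by omega
  cases c <;> simp [wt, noDD, desL, h']

lemma wt_desc_asc {a b c : ℤ} (h : b < a) (h2 : b < c) (l : List ℤ) :
    wt x a (b :: c :: l) = x * wt x b (c :: l) := by
  have h' : ¬ c < b := by omega
  simp [wt, noDD, desL, h, h', pow_add]

lemma wt_desc_desc {a b c : ℤ} (h : b < a) (h2 : c < b) (l : List ℤ) :
    wt x a (b :: c :: l) = 0 := by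
  simp [wt, noDD, h, h2]

lemma wt_desc_nil {a b : ℤ} (h : b < a) : wt x a [b] = x := by
  simp [wt, noDD, desL, h]

lemma wt_nil {a : ℤ} : wt x a [] = 1 := by
  simp [wt, noDD, desL]

/-- The insertions into `b :: l` that take place after `b`, split off from the insertions
directly before `b`. -/
lemma insSum_cons (N a b : ℤ) (l : List ℤ) :
    insSum x N a (b :: l) = wt x a (N :: b :: l) + wt x a (-N :: b :: l) +
      (((l.permutations'Aux N).map (fun c => wt x a (b :: c))).sum +
        ((l.permutations'Aux (-N)).map (fun c => wt x a (b :: c))).sum) := by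
  simp [insSum, List.permutations'Aux, Function.comp_def]
  ring

/-- Inserting `N` or `-N` into a word with `d` descents and no double descent keeps the number of
descents in `1 + 2d` cases, and raises it by one without creating a double descent in
`2n + 1 - 4d` cases, plus one more if the word starts with a descent. -/
lemma insSum_eq (N : ℤ) (l : List ℤ) : ∀ a : ℤ, (∀ z ∈ a :: l, -N < z ∧ z < N) →
    (a :: l).Nodup → noDD (a :: l) = true →
    insSum x N a l = (1 + 2 * (desL (a :: l) : A)) * x ^ desL (a :: l) +
      (2 * (l.length : A) + 1 - 4 * (desL (a :: l) : A) + if l.headD a < a then 1 else 0) *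
        x ^ (desL (a :: l) + 1) := by
  induction l with
  | nil =>
    intro a hN _ _
    have h1 := hN a (by simp)
    simp [insSum, List.permutations'Aux, wt_asc x h1.2, wt_desc_nil x h1.1, wt_nil, desL]
  | cons b l ih =>
    intro a hN hnd hdd
    have ha := hN a (by simp)
    have hb := hN b (by simp)
    have hne : a ≠ b := by
      intro h; simp [h] at hnd
    have hbl : noDD (b :: l) = true := by
      cases l with
      | nil => rfl
      | cons c l => simp [noDD] at hdd ⊢; exact hdd.2
    have ih' := ih b (fun z hz => hN z (List.mem_cons_of_mem _ hz)) hnd.of_cons hbl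
    rw [insSum_cons]
    rcases lt_or_gt_of_ne hne with hab | hab
    · have hab' : ¬ b < a := by omega
      have e : ((l.permutations'Aux N).map (fun c => wt x a (b :: c))).sum +
          ((l.permutations'Aux (-N)).map (fun c => wt x a (b :: c))).sum = insSum x N b l := by
        simp only [wt_asc x hab, insSum]
      have d : desL (a :: b :: l) = desL (b :: l) := by simp [desL, hab']
      have e1 : wt x a (-N :: b :: l) = x * x ^ desL (b :: l) := by
        rw [wt_desc_asc x ha.1 hb.1, wt_asc x hb.1, wt, if_pos hbl]
      have e2 : wt x a (N :: b :: l) =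
          (1 - if l.headD b < b then 1 else 0) * (x * x ^ desL (b :: l)) := by
        rw [wt_asc x ha.2]
        cases l with
        | nil => simp [wt_desc_nil x hb.2, desL]
        | cons c l =>
          have hbc : b ≠ c := by
            intro h; simp [h] at hnd
          rcases lt_or_gt_of_ne hbc with h | h
          · have h' : ¬ c < b := by omega
            rw [wt_desc_asc x hb.2 h, wt, if_pos hbl]
            simp [h']
          · rw [wt_desc_desc x hb.2 h]
            simp [h]
      rw [e, ih', d, e1, e2]
      simp only [List.headD_cons, hab', if_false, List.length_cons]
      push_cast
      ring
    ·
      -- Here `-N` cannot be inserted directly after `b`, and `b` is followed by an ascent or last.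
      have d : desL (a :: b :: l) = desL (b :: l) + 1 := by simp [desL, hab, add_comm]
      have e1 : wt x a (-N :: b :: l) = x * x ^ desL (b :: l) := by
        rw [wt_desc_asc x ha.1 hb.1, wt_asc x hb.1, wt, if_pos hbl]
      rw [wt_asc x ha.2, e1, d]
      cases l with
      | nil =>
        simp [wt_desc_nil x hb.2, desL, hab, List.permutations'Aux, wt_desc_asc x hab hb.2,
          wt_desc_desc x hab hb.1, wt_asc x hb.2, wt_nil]
        ring
      | cons c l =>
        have hc := hN c (by simp)
        have hbc : b < c := by
          have : b ≠ c := by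
            intro h; simp [h] at hnd
          simp [noDD, hab] at hdd
          omega
        have hbc' : ¬ c < b := by omega
        have hcl : wt x c l = x ^ desL (b :: c :: l) := by
          rw [← wt_asc x hbc, wt, if_pos hbl]
        have e2 : wt x N (b :: c :: l) = x * x ^ desL (b :: c :: l) := by
          rw [wt_desc_asc x hb.2 hbc, wt_asc x hbc, hcl]
        have e3 : wt x b (-N :: c :: l) = x * x ^ desL (b :: c :: l) := by
          rw [wt_desc_asc x hb.1 hc.1, wt_asc x hc.1, hcl]
        rw [insSum_cons, e3] at ih'
        simp only [List.permutations'Aux, List.map_cons, List.sum_cons, List.map_map,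
          Function.comp_def, wt_desc_asc x hab hb.2, wt_desc_desc x hab hb.1,
          wt_desc_asc x hab hbc, List.sum_map_mul_left, e2]
        simp only [List.headD_cons, hab, hbc', if_false, if_true, List.length_cons] at ih' ⊢
        push_cast at ih' ⊢
        linear_combination x * ih'

end weights

/-! ### Words of signed permutations -/

/-- Words of signed permutations of rank `n`, without the leading `0`: the absolute values of the
entries are `1, …, n` in some order. -/
def IsWord (n : ℕ) (l : List ℤ) : Prop := (l.map Int.natAbs).Perm (List.range' 1 n)

/-- The simsun words of rank `n`, without the leading `0`. -/
def simWords (n : ℕ) : Finset (List ℤ) := (RB n).image (fun π => List.ofFn (entry π))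

lemma natAbs_entry {n : ℕ} (π : SignedPerm n) (j : Fin n) :
    (entry π j).natAbs = (π.1 j : ℕ) + 1 := by
  unfold entry; split_ifs <;> omega

lemma entry_neg_iff {n : ℕ} (π : SignedPerm n) (j : Fin n) :
    entry π j < 0 ↔ π.2 j = true := by
  unfold entry; split_ifs with h <;> simp [h] <;> omega

lemma ofFn_entry_injective (n : ℕ) :
    Function.Injective (fun π : SignedPerm n => List.ofFn (entry π)) := by
  intro π ρ h
  have h' : ∀ j, entry π j = entry ρ j := congrFun (List.ofFn_injective h)
  refine Prod.ext (Equiv.ext fun j => Fin.ext ?_) (funext fun j => ?_)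
  · have := natAbs_entry π j
    rw [h', natAbs_entry] at this
    omega
  · rw [Bool.eq_iff_iff, ← entry_neg_iff, ← entry_neg_iff, h']

lemma isWord_ofFn {n : ℕ} (π : SignedPerm n) : IsWord n (List.ofFn (entry π)) := by
  unfold IsWord
  rw [List.perm_ext_iff_of_nodup]
  · intro a
    simp only [List.mem_map, List.mem_ofFn, List.mem_range'_1]
    constructor
    · rintro ⟨_, ⟨j, rfl⟩, rfl⟩
      rw [natAbs_entry]
      omega
    · intro h
      refine ⟨_, ⟨π.1.symm ⟨a - 1, by omega⟩, rfl⟩, ?_⟩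
      rw [natAbs_entry]
      simp
      omega
  · rw [List.map_ofFn, List.nodup_ofFn]
    intro i j h
    simp only [Function.comp_apply, natAbs_entry] at h
    exact π.1.injective (Fin.ext (by omega))
  · exact List.nodup_range'

lemma IsWord.length {n : ℕ} {l : List ℤ} (h : IsWord n l) : l.length = n := by
  simpa using List.Perm.length_eq h

lemma IsWord.mem {n : ℕ} {l : List ℤ} (h : IsWord n l) {z : ℤ} (hz : z ∈ l) :
    1 ≤ z.natAbs ∧ z.natAbs ≤ n := by
  have := (List.Perm.mem_iff h).1 (List.mem_map_of_mem (f := Int.natAbs) hz)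
  rw [List.mem_range'_1] at this
  omega

lemma IsWord.nodup {n : ℕ} {l : List ℤ} (h : IsWord n l) : (0 :: l).Nodup := by
  rw [List.nodup_cons]
  refine ⟨fun h0 => ?_, List.Nodup.of_map Int.natAbs ?_⟩
  · have := h.mem h0
    simp at this
  · exact (List.Perm.nodup_iff h).2 List.nodup_range'

lemma IsWord.exists_ofFn {n : ℕ} {l : List ℤ} (h : IsWord n l) :
    ∃ π : SignedPerm n, List.ofFn (entry π) = l := by
  have hl := h.length
  subst hl
  have hm : ∀ j : Fin l.length, 1 ≤ l[j].natAbs ∧ l[j].natAbs ≤ l.length := fun j =>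
    h.mem (List.getElem_mem _)
  let f : Fin l.length → Fin l.length := fun j => ⟨l[j].natAbs - 1, by have := hm j; omega⟩
  have hf : Function.Injective f := by
    intro i j hij
    have h1 : l[i].natAbs = l[j].natAbs := by
      have := congrArg Fin.val hij
      have := hm i
      have := hm j
      simp only [f] at *
      omega
    have hn : (l.map Int.natAbs).Nodup := (List.Perm.nodup_iff h).2 List.nodup_range'
    apply Fin.ext
    refine (hn.getElem_inj_iff (hi := by simp) (hj := by simp)).1 ?_
    simpa using h1
  refine ⟨(Equiv.ofBijective f (Finite.injective_iff_bijective.1 hf),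
    fun j => decide (l[j] < 0)), ?_⟩
  refine List.ext_getElem (by simp) fun i h1 h2 => ?_
  have := hm ⟨i, h2⟩
  simp [entry, f] at this ⊢
  split_ifs <;> omega

/-- The simsun condition on a word without its leading `0`. -/
def SimL (n : ℕ) (l : List ℤ) : Prop :=
  ∀ m ≤ n, noDD ((0 :: l).filter (fun a => a.natAbs ≤ m)) = true

lemma mem_simWords {n : ℕ} {l : List ℤ} : l ∈ simWords n ↔ IsWord n l ∧ SimL n l := by
  simp only [simWords, mem_image, RB, mem_filter, mem_univ, true_and]
  constructor
  · rintro ⟨π, h, rfl⟩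
    exact ⟨isWord_ofFn π, h⟩
  · rintro ⟨h, h2⟩
    obtain ⟨π, rfl⟩ := h.exists_ofFn
    exact ⟨π, h2, rfl⟩

lemma filter_word {n m : ℕ} {l : List ℤ} (h : IsWord n l) (hm : n ≤ m) :
    l.filter (fun a => a.natAbs ≤ m) = l := by
  rw [List.filter_eq_self]
  intro z hz
  have := h.mem hz
  simp
  omega

lemma SimL.noDD {n : ℕ} {l : List ℤ} (h : IsWord n l) (hs : SimL n l) :
    noDD (0 :: l) = true := by
  have := hs n le_rfl
  rwa [List.filter_cons_of_pos (by simp), filter_word h le_rfl] at this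

/-! ### Simsun words of rank `n + 1` as insertions into those of rank `n` -/

lemma mem_insert_iff {x : ℤ} {l c : List ℤ} :
    c ∈ l.permutations'Aux x ↔ ∃ s t, l = s ++ t ∧ c = s ++ x :: t := by
  induction l generalizing c with
  | nil =>
    simp [List.permutations'Aux]
  | cons b l ih =>
    simp only [List.permutations'Aux, List.mem_cons, List.mem_map, ih]
    constructor
    · rintro (rfl | ⟨_, ⟨s, t, rfl, rfl⟩, rfl⟩)
      · exact ⟨[], _, rfl, rfl⟩
      · exact ⟨b :: s, t, rfl, rfl⟩
    · rintro ⟨s, t, h, rfl⟩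
      cases s with
      | nil => left; simp at h ⊢; exact h.symm
      | cons d s =>
        simp at h
        obtain ⟨rfl, rfl⟩ := h
        exact Or.inr ⟨_, ⟨s, t, rfl, rfl⟩, rfl⟩

/-- All words obtained from `l` by inserting `N` or `-N`. -/
def children (N : ℤ) (l : List ℤ) : Finset (List ℤ) :=
  (l.permutations'Aux N).toFinset ∪ (l.permutations'Aux (-N)).toFinset

lemma mem_children {N : ℤ} {l c : List ℤ} :
    c ∈ children N l ↔ ∃ x s t, (x = N ∨ x = -N) ∧ l = s ++ t ∧ c = s ++ x :: t := by
  simp only [children, mem_union, List.mem_toFinset, mem_insert_iff]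
  constructor
  · rintro (⟨s, t, h⟩ | ⟨s, t, h⟩)
    · exact ⟨N, s, t, Or.inl rfl, h⟩
    · exact ⟨-N, s, t, Or.inr rfl, h⟩
  · rintro ⟨x, s, t, rfl | rfl, h⟩
    · exact Or.inl ⟨s, t, h⟩
    · exact Or.inr ⟨s, t, h⟩

/-- Restricting to entries of absolute value at most `m ≤ n` forgets the insertion of `±(n + 1)`;
in particular, for `m = n`, the parent of a word can be recovered from it. -/
lemma filter_children {n m : ℕ} (hm : m ≤ n) {l c : List ℤ}
    (hc : c ∈ children ((n : ℤ) + 1) l) :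
    c.filter (fun a => a.natAbs ≤ m) = l.filter (fun a => a.natAbs ≤ m) := by
  obtain ⟨x, s, t, hx, rfl, rfl⟩ := mem_children.1 hc
  have : ¬ x.natAbs ≤ m := by omega
  simp [List.filter_append, this]

lemma isWord_children {n : ℕ} {l c : List ℤ} (hc : c ∈ children ((n : ℤ) + 1) l) :
    IsWord (n + 1) c ↔ IsWord n l := by
  obtain ⟨x, s, t, hx, rfl, rfl⟩ := mem_children.1 hc
  have hx' : x.natAbs = n + 1 := by omega
  have e : List.range' 1 (n + 1) = List.range' 1 n ++ [n + 1] := by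
    rw [List.range'_concat]; simp [add_comm]
  unfold IsWord
  rw [e, List.map_append, List.map_cons, hx', (List.perm_middle).congr_left,
    (List.perm_append_singleton _ _).congr_right, List.perm_cons, List.map_append]

lemma IsWord.exists_parent {n : ℕ} {c : List ℤ} (h : IsWord (n + 1) c) :
    ∃ l, c ∈ children ((n : ℤ) + 1) l := by
  have h1 : n + 1 ∈ c.map Int.natAbs := (List.Perm.mem_iff h).2 (by simp [List.mem_range'_1])
  obtain ⟨x, hx, hx'⟩ := List.mem_map.1 h1
  obtain ⟨s, t, rfl⟩ := List.append_of_mem hx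
  exact ⟨s ++ t, mem_children.2 ⟨x, s, t, by omega, rfl, rfl⟩⟩

lemma simL_children {n : ℕ} {l c : List ℤ} (hl : IsWord n l)
    (hc : c ∈ children ((n : ℤ) + 1) l) :
    SimL (n + 1) c ↔ SimL n l ∧ noDD (0 :: c) = true := by
  have key : ∀ m ≤ n, (0 :: c).filter (fun a => a.natAbs ≤ m) =
      (0 :: l).filter (fun a => a.natAbs ≤ m) := by
    intro m hm
    rw [List.filter_cons_of_pos (by simp), List.filter_cons_of_pos (by simp),
      filter_children hm hc]
  have hw := (isWord_children hc).2 hl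
  constructor
  · intro h
    exact ⟨fun m hm => by rw [← key m hm]; exact h m (by omega), h.noDD hw⟩
  · rintro ⟨h1, h2⟩ m hm
    rcases Nat.lt_or_ge n m with h | h
    · rwa [List.filter_cons_of_pos (by simp), filter_word hw (by omega)]
    · rw [key m h]; exact h1 m h

/-- A simsun word of rank `n + 1` is an insertion of `±(n + 1)` into a simsun word of rank `n`
that creates no double descent. -/
lemma simWords_succ (n : ℕ) : simWords (n + 1) = (simWords n).biUnion
    (fun l => (children ((n : ℤ) + 1) l).filter (fun c => noDD (0 :: c) = true)) := by
  ext c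
  simp only [mem_biUnion, mem_simWords, mem_filter]
  constructor
  · rintro ⟨h1, h2⟩
    obtain ⟨l, hl⟩ := h1.exists_parent
    have hw := (isWord_children hl).1 h1
    have := (simL_children hw hl).1 h2
    exact ⟨l, ⟨hw, this.1⟩, hl, this.2⟩
  · rintro ⟨l, ⟨hw, hs⟩, hc, hd⟩
    exact ⟨(isWord_children hc).2 hw, (simL_children hw hc).2 ⟨hs, hd⟩⟩

/-- Every simsun word of rank `n + 1` arises from exactly one parent, position and sign, so a sum
over these words is a sum over insertions. -/
lemma sum_simWords_succ {A : Type*} [CommRing A] (n : ℕ) (f : List ℤ → A) :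
    ∑ c ∈ simWords (n + 1), f c = ∑ l ∈ simWords n,
      (((l.permutations'Aux ((n : ℤ) + 1)).map
          (fun c => if noDD (0 :: c) = true then f c else 0)).sum +
        ((l.permutations'Aux (-((n : ℤ) + 1))).map
          (fun c => if noDD (0 :: c) = true then f c else 0)).sum) := by
  rw [simWords_succ, sum_biUnion]
  · refine sum_congr rfl fun l hl => ?_
    have hw := (mem_simWords.1 hl).1
    have hp : ((n : ℤ) + 1) ∉ l := fun h => by have := hw.mem h; omega
    have hm : -((n : ℤ) + 1) ∉ l := fun h => by have := hw.mem h; omega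
    rw [sum_filter, children, sum_union, List.sum_toFinset, List.sum_toFinset]
    · exact (List.nodup_permutations'Aux_iff).2 hm
    · exact (List.nodup_permutations'Aux_iff).2 hp
    · rw [Finset.disjoint_left]
      intro c h1 h2
      rw [List.mem_toFinset, mem_insert_iff] at h1 h2
      obtain ⟨s, t, rfl, rfl⟩ := h1
      obtain ⟨s', t', h, h'⟩ := h2
      have : ((n : ℤ) + 1) ∈ s' ++ -((n : ℤ) + 1) :: t' := by rw [← h']; simp
      rw [h] at hp
      simp at this hp
      rcases this with h | h | h
      · exact hp.1 h
      · omega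
      · exact hp.2 h
  · intro l hl l' hl' hne
    rw [Function.onFun, Finset.disjoint_left]
    intro c h1 h2
    apply hne
    rw [← filter_word (mem_simWords.1 hl).1 le_rfl, ← filter_word (mem_simWords.1 hl').1 le_rfl,
      ← filter_children le_rfl (mem_filter.1 h1).1, ← filter_children le_rfl (mem_filter.1 h2).1]

/-! ### The descent polynomials as sums over words -/

lemma wordFn_succ {n : ℕ} (π : SignedPerm n) (i : ℕ) :
    wordFn π (i + 1) = (List.ofFn (entry π)).getD i 0 := by
  unfold wordFn
  by_cases h : i < n
  · rw [dif_pos (by omega)]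
    simp [h]
  · rw [dif_neg (by omega)]
    simp [h]

lemma wordFn_eq_getD {n : ℕ} (π : SignedPerm n) (i : ℕ) :
    wordFn π i = (0 :: List.ofFn (entry π)).getD i 0 := by
  cases i with
  | zero => simp [wordFn]
  | succ i => rw [wordFn_succ, List.getD_cons_succ]

lemma desL_eq_card (l : List ℤ) : ∀ a : ℤ, desL (a :: l) =
    ((range l.length).filter
      (fun i => (a :: l).getD (i + 1) 0 < (a :: l).getD i 0)).card := by
  induction l with
  | nil => intro a; simp [desL]
  | cons b l ih =>
    intro a
    rw [desL, ih b, card_filter, card_filter, List.length_cons, sum_range_succ']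
    simp only [List.getD_cons_succ, List.getD_cons_zero]
    ring

lemma desB_eq {n : ℕ} (π : SignedPerm n) : desB π = desL (0 :: List.ofFn (entry π)) := by
  rw [desL_eq_card, desB]
  simp only [wordFn_eq_getD, List.length_ofFn]

lemma wordFn_one {n : ℕ} (π : SignedPerm n) :
    wordFn π 1 = (List.ofFn (entry π)).headD 0 := by
  rw [wordFn_succ]
  cases List.ofFn (entry π) <;> simp

open Polynomial in
lemma Rpoly_eq (n : ℕ) : Rpoly n = ∑ l ∈ simWords n, X ^ desL (0 :: l) := by
  rw [simWords, sum_image (fun a _ b _ h => ofFn_entry_injective n h), Rpoly]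
  simp only [desB_eq]

open Polynomial in
lemma Rmpoly_eq (n : ℕ) :
    Rmpoly n = ∑ l ∈ simWords n, if l.headD 0 < 0 then X ^ desL (0 :: l) else 0 := by
  rw [simWords, sum_image (fun a _ b _ h => ofFn_entry_injective n h), Rmpoly, RBm, sum_filter]
  simp only [desB_eq, wordFn_one]

/-- The empty permutation is counted in `Rppoly 0`, and the first entry never vanishes for
`0 < n`, so the two sign classes partition `RB n`. -/
lemma Rppoly_eq (n : ℕ) : Rppoly n = Rpoly n - Rmpoly n := by
  rw [eq_sub_iff_add_eq, Rppoly, Rmpoly, Rpoly, RBp, RBm,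
    ← sum_filter_add_sum_filter_not (RB n) (fun π => 0 < wordFn π 1 ∨ n = 0)]
  congr 2
  ext π
  simp only [mem_filter, and_congr_right_iff]
  intro _
  rcases Nat.eq_zero_or_pos n with rfl | hn
  · simp [wordFn]
  · have : wordFn π 1 ≠ 0 := by
      have h := natAbs_entry π ⟨0, hn⟩
      have e : wordFn π 1 = entry π ⟨0, hn⟩ := by
        unfold wordFn; rw [dif_pos (by omega)]
      rw [e]; omega
    omega

/-! ### The recurrences -/

lemma bound_of_isWord {n : ℕ} {l : List ℤ} (h : IsWord n l) :
    ∀ z ∈ 0 :: l, -((n : ℤ) + 1) < z ∧ z < (n : ℤ) + 1 := by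
  intro z hz
  rcases List.mem_cons.1 hz with rfl | hz
  · omega
  · have := h.mem hz
    omega

lemma insSum_word {A : Type*} [CommRing A] (x : A) {n : ℕ} {l : List ℤ} (h : l ∈ simWords n) :
    insSum x ((n : ℤ) + 1) 0 l = (1 + 2 * (desL (0 :: l) : A)) * x ^ desL (0 :: l) +
      (2 * (n : A) + 1 - 4 * (desL (0 :: l) : A) + if l.headD 0 < 0 then 1 else 0) *
        x ^ (desL (0 :: l) + 1) := by
  obtain ⟨hw, hs⟩ := mem_simWords.1 h
  rw [insSum_eq x _ l 0 (bound_of_isWord hw) hw.nodup (hs.noDD hw), hw.length]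

/-- The total weight of the insertions of `N = n + 1` or `-N` into `l` that produce a
negative first entry. When `l` itself starts with a
negative entry, only the insertion of `N` in front is lost from the full count; otherwise only
the insertion of `-N` in front contributes. -/
lemma insSum_neg {A : Type*} [CommRing A] (x : A) {n : ℕ} {l : List ℤ} (h : l ∈ simWords n) :
    ((l.permutations'Aux ((n : ℤ) + 1)).map (fun c => if noDD (0 :: c) = true then
        (if c.headD 0 < 0 then x ^ desL (0 :: c) else 0) else 0)).sum +
      ((l.permutations'Aux (-((n : ℤ) + 1))).map (fun c => if noDD (0 :: c) = true then
        (if c.headD 0 < 0 then x ^ desL (0 :: c) else 0) else 0)).sum =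
    if l.headD 0 < 0 then 2 * (desL (0 :: l) : A) * x ^ desL (0 :: l) +
      (2 * (n : A) + 2 - 4 * (desL (0 :: l) : A)) * x ^ (desL (0 :: l) + 1)
    else x ^ (desL (0 :: l) + 1) := by
  have hS := insSum_word x h
  obtain ⟨hw, hs⟩ := mem_simWords.1 h
  have hdd := hs.noDD hw
  have hsw : ∀ c : List ℤ, (if noDD (0 :: c) = true then
      (if c.headD 0 < 0 then x ^ desL (0 :: c) else 0) else 0) =
      if c.headD 0 < 0 then wt x 0 c else 0 := by
    intro c
    unfold wt
    split_ifs <;> rfl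
  simp only [hsw]
  have hp : ¬ ((n : ℤ) + 1 < 0) := by omega
  have hm : -((n : ℤ) + 1) < 0 := by omega
  cases l with
  | nil =>
    simp only [List.permutations'Aux, List.map_cons, List.map_nil, List.sum_singleton,
      List.headD_cons, List.headD_nil, hp, hm, if_true, if_false, wt_desc_nil x hm, desL, lt_irrefl]
    ring
  | cons b l =>
    have hb := bound_of_isWord hw b (by simp)
    have hb0 := hw.mem (z := b) (by simp)
    rcases lt_or_gt_of_ne (show b ≠ 0 by omega) with hb' | hb'
    · rw [insSum_cons] at hS
      have e : wt x 0 ((n + 1 : ℤ) :: b :: l) = x ^ desL (0 :: b :: l) := by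
        rw [wt_asc x (by omega)]
        cases l with
        | nil => simp [wt_desc_nil x hb.2, desL, hb']
        | cons c l =>
          have hbc : b < c := by
            have : b ≠ c := by
              have := hw.nodup
              intro h; simp [h] at this
            simp [noDD, hb'] at hdd
            omega
          have := wt_desc_asc x hb' hbc l
          rw [wt_desc_asc x hb.2 hbc, ← this, wt, if_pos hdd]
      rw [e] at hS
      simp only [List.permutations'Aux, List.map_cons, List.sum_cons, List.map_map,
          Function.comp_def, List.headD_cons, hb', hp, hm, if_true, if_false] at hS ⊢
      linear_combination hS
    · have hb'' : ¬ b < 0 := by omega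
      have e : wt x 0 (-(n + 1 : ℤ) :: b :: l) = x ^ (desL (0 :: b :: l) + 1) := by
        rw [wt_desc_asc x hm hb.1, wt_asc x hb.1, ← wt_asc x hb', wt, if_pos hdd, pow_succ']
      simp [List.permutations'Aux, Function.comp_def, hb'', hp, -neg_add_rev, e]

open Polynomial in
lemma X_mul_derivative_pow (d : ℕ) :
    (X : ℚ[X]) * derivative (X ^ d) = (d : ℚ[X]) * X ^ d := by
  cases d with
  | zero => simp
  | succ d => rw [derivative_X_pow]; simp [pow_succ]; ring

open Polynomial in
lemma Rpoly_succ (n : ℕ) : Rpoly (n + 1) =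
    (1 + (2 * (n : ℚ[X]) + 1) * X) * Rpoly n + 2 * X * (1 - 2 * X) * derivative (Rpoly n) +
      X * Rmpoly n := by
  rw [Rmpoly_eq, Rpoly_eq, Rpoly_eq, sum_simWords_succ, derivative_sum]
  simp only [mul_sum]
  rw [← sum_add_distrib, ← sum_add_distrib]
  refine sum_congr rfl fun l hl => ?_
  have h1 := insSum_word (X : ℚ[X]) hl
  have h2 := X_mul_derivative_pow (desL (0 :: l))
  rw [insSum] at h1
  refine h1.trans ?_
  split_ifs <;> linear_combination (-2 * (1 - 2 * X)) * h2

open Polynomial in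
lemma Rmpoly_succ (n : ℕ) : Rmpoly (n + 1) =
    (2 * (n : ℚ[X]) + 1) * X * Rmpoly n + 2 * X * (1 - 2 * X) * derivative (Rmpoly n) +
      X * Rpoly n := by
  rw [Rmpoly_eq, Rmpoly_eq, Rpoly_eq, sum_simWords_succ, derivative_sum]
  simp only [mul_sum]
  rw [← sum_add_distrib, ← sum_add_distrib]
  refine sum_congr rfl fun l hl => ?_
  have h2 := X_mul_derivative_pow (desL (0 :: l))
  rw [insSum_neg (X : ℚ[X]) hl]
  split_ifs
  · linear_combination (-2 * (1 - 2 * X)) * h2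
  · rw [derivative_zero]; ring

lemma simWords_zero : simWords 0 = {[]} := by
  ext l
  rw [mem_simWords, mem_singleton]
  constructor
  · rintro ⟨h, _⟩
    exact List.length_eq_zero_iff.1 h.length
  · rintro rfl
    exact ⟨by simp [IsWord], fun m _ => by simp [noDD]⟩

open Polynomial in
/-- The recurrence relations for the descent polynomials `R⁺_n`, `R⁻_n`, `R_n`. -/
theorem stmt3 :
    Rppoly 0 = 1 ∧ Rpoly 0 = 1 ∧ Rmpoly 0 = 0 ∧
    ∀ n : ℕ,
      Rppoly (n + 1) =
          2 * (n : ℚ[X]) * X * Rppoly n + 2 * X * (1 - 2 * X) * derivative (Rppoly n) +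
            Rpoly n ∧
      Rmpoly (n + 1) =
          (2 * (n : ℚ[X]) + 1) * X * Rmpoly n + 2 * X * (1 - 2 * X) * derivative (Rmpoly n) +
            X * Rpoly n ∧
      Rpoly (n + 1) =
          (1 + (2 * (n : ℚ[X]) + 1) * X) * Rpoly n + 2 * X * (1 - 2 * X) * derivative (Rpoly n) +
            X * Rmpoly n := by
  have h0 : Rpoly 0 = 1 := by rw [Rpoly_eq, simWords_zero]; simp [desL]
  have h0' : Rmpoly 0 = 0 := by rw [Rmpoly_eq, simWords_zero]; simp
  refine ⟨by rw [Rppoly_eq, h0, h0', sub_zero], h0, h0', fun n => ⟨?_, Rmpoly_succ n, Rpoly_succ n⟩⟩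
  rw [Rppoly_eq, Rppoly_eq, Rmpoly_succ, Rpoly_succ, derivative_sub]
  ring
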